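/- arXiv:1605.07330 — 5 statements merged into one kernel-verified Lean document; each statement's English description precedes it below -/
import Mathlib

section
/- The operation ⋆ on X is associative, and the tuple (1) is a two-sided identity for ⋆; hence (X,⋆) is a monoid. -/
/-- Finite continued fraction `[0; n₁, …, n_k] = 1/(n₁ + 1/(n₂ + ⋯ + 1/n_k))`,
with the empty tuple giving `0`. -/
def cf : List ℕ → ℚ
  | [] => 0
  | n :: t => 1 / (n + cf t)

/-- `theta (n₁, …, n_k) = [0; n₁, …, n_k, 1]`. -/
def theta (a : List ℕ) : ℚ := cf (a ++ [1])

/-- Membership in `X`: a nonempty tuple of positive integers. -/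
def IsX (a : List ℕ) : Prop := a ≠ [] ∧ ∀ n ∈ a, 0 < n

/-- The monoid operation `⋆` on `X` (concatenation of paths in the Farey tree),
with the zero-elimination rules `(…, m, 0, n, …) = (…, m + n, …)` and a trailing
zero dropped, built into the definition. -/
def star (x y : List ℕ) : List ℕ :=
  match y with
  | [] => x
  | m :: rest =>
    if x.length % 2 = 0 then
      if m = 1 then
        match rest with
        | [] => x
        | m2 :: rest2 => x.dropLast ++ (x.getLastD 0 + m2) :: rest2
      else x ++ (m - 1) :: rest
    else x.dropLast ++ (x.getLastD 0 + m - 1) :: rest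

/-- The involution `K`: `K(1) = (1)`, `K(1, n₂, …, n_k) = (n₂+1, n₃, …, n_k)`,
and `K(n₁, …, n_k) = (1, n₁−1, n₂, …, n_k)` for `n₁ ≥ 2`. -/
def K : List ℕ → List ℕ
  | [] => []
  | [1] => [1]
  | 1 :: n :: rest => (n + 1) :: rest
  | n :: rest => 1 :: (n - 1) :: rest

/-- The Farey map on tuples: `(n₁, …, n_k) ↦ (n₁ − 1, n₂, …, n_k)` if `n₁ ≥ 2`,
and `(1, n₂, …, n_k) ↦ (n₂, …, n_k)`. -/
def TF : List ℕ → List ℕ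
  | [] => []
  | 1 :: rest => rest
  | n :: rest => (n - 1) :: rest

/-- The flipped Farey map (parent map in the Farey tree):
`(n₁, …, n_k) ↦ (n₁, …, n_k − 1)`, a trailing zero being dropped. -/
def TpF (a : List ℕ) : List ℕ := (TF a.reverse).reverse

/-- Auxiliary: continuant computed from the front. -/
def contAux : List ℕ → ℕ
  | [] => 1
  | [n] => n
  | n :: m :: rest => n * contAux (m :: rest) + contAux rest

/-- The continuant `⟨n₁, …, n_k⟩`: `⟨⟩ = 1`, `⟨n₁⟩ = n₁`,
`⟨n₁, …, n_k⟩ = n_k ⟨n₁, …, n_{k−1}⟩ + ⟨n₁, …, n_{k−2}⟩`. -/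
def cont (a : List ℕ) : ℕ := contAux a.reverse

/-- Length of the Farey interval `I(a)`, the interval with endpoints
`[0; n₁, …, n_{k−1}]` and `[0; n₁, …, n_k]`. -/
def ilen (a : List ℕ) : ℚ := |cf a - cf a.dropLast|

/-- Auxiliary for `J`: process the middle entries `n₂, …, n_{k−1}`, keeping the
output built so far in reversed order; an entry `n ≥ 2` contributes the block
`1_{n−2}, 2`, while an entry `n = 1` contributes `1_{−1}, 2`, which is resolved
by the rule `(…, m, 1_{−1}, 2, …) = (…, m + 1, …)`. -/
def Jmid : List ℕ → List ℕ → List ℕ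
  | [], out => out
  | n :: rest, out =>
    if n = 1 then
      Jmid rest (match out with
        | [] => [1]
        | h :: t => (h + 1) :: t)
    else
      Jmid rest (2 :: (List.replicate (n - 2) 1 ++ out))

/-- Dyer's involution `J` (jimm) on tuples: `J(n₁) = 1_{n₁}` and, for `k ≥ 2`,
`J(n₁, …, n_k) = (1_{n₁−1}, 2, 1_{n₂−2}, 2, …, 1_{n_{k−1}−2}, 2, 1_{n_k−1})`,
with `1_0` deleted and `1_{−1}` resolved by `(…, m, 1_{−1}, n, …) = (…, m+n−1, …)`. -/
def J : List ℕ → List ℕ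
  | [] => []
  | [n] => List.replicate n 1
  | n :: rest =>
      (Jmid rest.dropLast (2 :: List.replicate (n - 1) 1)).reverse
        ++ List.replicate (rest.getLastD 1 - 1) 1

/-!
Read a tuple `(n₁, …, n_k)` of `X` as the path `L^(n₁-1) R^n₂ L^n₃ ⋯` in the Farey tree. The
zero-elimination rules do not change the word read off from a tuple, so `⋆` is the concatenation of
paths. The entries of a tuple of `X` are the lengths of the maximal runs of its path preceded by one
more `L`, so the path determines the tuple and the monoid laws are inherited from those of words.
-/

section Star

variable {x y : List ℕ}

theorem exists_eq_add_one_cons_of_isX (hx : IsX x) :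
    ∃ m t, x = (m + 1) :: t ∧ ∀ n ∈ t, 0 < n := by
  obtain ⟨n, t, rfl⟩ := List.exists_cons_of_ne_nil hx.1
  obtain ⟨hn, ht⟩ := List.forall_mem_cons.mp hx.2
  exact ⟨n - 1, t, by rw [Nat.sub_add_cancel hn], ht⟩

theorem star_concat_add_one_cons (hx : x.length % 2 = 0) (a m : ℕ) (r : List ℕ) :
    star (x ++ [a]) ((m + 1) :: r) = x ++ (a + m) :: r := by
  simp [_root_.star, Nat.add_mod, hx, List.getLastD_eq_getLast?]

theorem star_add_two_cons (hx : x.length % 2 = 0) (m : ℕ) (r : List ℕ) :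
    star x ((m + 2) :: r) = x ++ (m + 1) :: r := by
  simp [_root_.star, hx]

theorem star_concat_one_cons (hx : x.length % 2 = 1) (a m : ℕ) (r : List ℕ) :
    star (x ++ [a]) (1 :: m :: r) = x ++ (a + m) :: r := by
  simp [_root_.star, Nat.add_mod, hx, List.getLastD_eq_getLast?]

theorem star_singleton_one (x : List ℕ) : star x [1] = x := by
  rcases List.eq_nil_or_concat' x with rfl | ⟨u, a, rfl⟩ <;>
    simp [_root_.star, List.getLastD_eq_getLast?]

theorem isX_append_add_cons {a : ℕ} (hx : IsX (x ++ [a])) (m : ℕ) (hy : ∀ n ∈ y, 0 < n) :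
    IsX (x ++ (a + m) :: y) := by
  have hpos := hx.2
  exact ⟨by simp, by grind⟩

theorem isX_star (hx : IsX x) (hy : IsX y) : IsX (star x y) := by
  obtain ⟨u, a, rfl⟩ := (List.eq_nil_or_concat' x).resolve_left hx.1
  obtain ⟨m, r, rfl, hr⟩ := exists_eq_add_one_cons_of_isX hy
  rcases Nat.mod_two_eq_zero_or_one u.length with hu | hu
  · rw [star_concat_add_one_cons hu]
    exact isX_append_add_cons hx m hr
  have hua : (u ++ [a]).length % 2 = 0 := by simp [Nat.add_mod, hu]
  match m, r with
  | 0, [] => rwa [star_singleton_one]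
  | 0, k :: r =>
    rw [zero_add, star_concat_one_cons hu]
    exact isX_append_add_cons hx k (List.forall_mem_of_forall_mem_cons hr)
  | m + 1, r =>
    rw [star_add_two_cons hua]
    exact ⟨by simp, List.forall_mem_append.mpr ⟨hx.2, List.forall_mem_cons.mpr ⟨m.succ_pos, hr⟩⟩⟩

end Star

/-- The word `b^n₁ c^n₂ b^n₃ ⋯`, with `c = !b`, whose exponents are the entries of a tuple. Zero
exponents are allowed, so that the zero-elimination rules can be compared on words. -/
def runs (b : Bool) : List ℕ → List Bool
  | [] => []
  | n :: t => List.replicate n b ++ runs (!b) t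

/-- The path `L^(n₁-1) R^n₂ L^n₃ ⋯` of a tuple in the Farey tree, as a word with `L = true` and
`R = false`. The subtraction `n - 1` truncates only at a first entry `0`, which `IsX` excludes. -/
def path : List ℕ → List Bool
  | [] => []
  | n :: t => runs true ((n - 1) :: t)

section Runs

variable {b : Bool} {t x y : List ℕ}

theorem runs_append (b : Bool) (x y : List ℕ) :
    runs b (x ++ y) = runs b x ++ runs (if x.length % 2 = 0 then b else !b) y := by
  induction x generalizing b with
  | nil => simp [runs]
  | cons n x ih =>
    rcases Nat.mod_two_eq_zero_or_one x.length with h | h <;>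
      simp [runs, ih, Nat.add_mod, h]

theorem runs_append_zero_cons (b : Bool) (x : List ℕ) (m n : ℕ) (y : List ℕ) :
    runs b (x ++ m :: 0 :: n :: y) = runs b (x ++ (m + n) :: y) := by
  simp [runs_append, runs, ← List.replicate_append_replicate]

theorem takeWhile_runs_not (ht : ∀ n ∈ t, 0 < n) :
    (runs (!b) t).takeWhile (· == b) = [] := by
  cases t with
  | nil => rfl
  | cons n t =>
    obtain ⟨k, rfl⟩ := Nat.exists_eq_add_one.mpr (ht n List.mem_cons_self)
    simp [runs, List.replicate_succ]

theorem takeWhile_runs_cons (n : ℕ) (ht : ∀ k ∈ t, 0 < k) :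
    (runs b (n :: t)).takeWhile (· == b) = List.replicate n b := by
  rw [runs, List.takeWhile_append_of_pos (by simp), takeWhile_runs_not ht, List.append_nil]

theorem runs_ne_nil (hx : IsX x) : runs b x ≠ [] := by
  obtain ⟨m, t, rfl, -⟩ := exists_eq_add_one_cons_of_isX hx
  simp [runs]

theorem eq_of_runs_eq (hx : ∀ n ∈ x, 0 < n) (hy : ∀ n ∈ y, 0 < n)
    (h : runs b x = runs b y) : x = y := by
  induction x generalizing b y with
  | nil =>
    by_contra hne
    exact runs_ne_nil ⟨Ne.symm hne, hy⟩ h.symm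
  | cons n x ih =>
    cases y with
    | nil => exact absurd h (runs_ne_nil ⟨List.cons_ne_nil n x, hx⟩)
    | cons m y =>
      have hx' := List.forall_mem_of_forall_mem_cons hx
      have hy' := List.forall_mem_of_forall_mem_cons hy
      obtain rfl : n = m := by
        have hrun := congrArg (List.takeWhile (· == b)) h
        rw [takeWhile_runs_cons n hx', takeWhile_runs_cons m hy'] at hrun
        exact List.replicate_left_inj.mp hrun
      rw [ih hx' hy' (List.append_cancel_left h)]

end Runs

section Path

variable {x y : List ℕ}

theorem runs_true_eq_cons_path (hx : IsX x) : runs true x = true :: path x := by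
  obtain ⟨m, t, rfl, -⟩ := exists_eq_add_one_cons_of_isX hx
  simp [path, runs, List.replicate_succ]

theorem eq_of_path_eq (hx : IsX x) (hy : IsX y) (h : path x = path y) : x = y :=
  eq_of_runs_eq (b := true) hx.2 hy.2 <| by
    rw [runs_true_eq_cons_path hx, runs_true_eq_cons_path hy, h]

theorem runs_true_star (hx : x ≠ []) (hy : IsX y) :
    runs true (star x y) = runs true x ++ path y := by
  obtain ⟨u, a, rfl⟩ := (List.eq_nil_or_concat' x).resolve_left hx
  obtain ⟨m, r, rfl, -⟩ := exists_eq_add_one_cons_of_isX hy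
  rcases Nat.mod_two_eq_zero_or_one u.length with hu | hu
  · rw [star_concat_add_one_cons hu, ← runs_append_zero_cons]
    simp [runs_append, runs, path, hu]
  have hua : (u ++ [a]).length % 2 = 0 := by simp [Nat.add_mod, hu]
  match m, r with
  | 0, [] => simp [star_singleton_one, path, runs]
  | 0, k :: r =>
    rw [zero_add, star_concat_one_cons hu, ← runs_append_zero_cons]
    simp [runs_append, runs, path, hu]
  | m + 1, r =>
    rw [star_add_two_cons hua, runs_append, if_pos hua]
    rfl

theorem path_star (hx : IsX x) (hy : IsX y) : path (star x y) = path x ++ path y := by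
  have h := runs_true_star hx.1 hy
  rw [runs_true_eq_cons_path (isX_star hx hy), runs_true_eq_cons_path hx] at h
  exact List.tail_eq_of_cons_eq h

end Path

/-- `⋆` is an associative operation on `X` and `(1)` is a two-sided identity,
so `(X, ⋆)` is a monoid. -/
theorem star_assoc_and_one :
    (∀ x y : List ℕ, IsX x → IsX y → IsX (star x y)) ∧
    (∀ x y z : List ℕ, IsX x → IsX y → IsX z →
      star (star x y) z = star x (star y z)) ∧
    (∀ x : List ℕ, IsX x → star x [1] = x ∧ star [1] x = x) := by
  have isX_one : IsX [1] := ⟨by simp, by simp⟩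
  have path_one : path [1] = [] := rfl
  refine ⟨fun x y => isX_star, fun x y z hx hy hz => ?assoc,
    fun x hx => ⟨star_singleton_one x, ?left_one⟩⟩
  case assoc =>
    have hxy := isX_star hx hy
    have hyz := isX_star hy hz
    refine eq_of_path_eq (isX_star hxy hz) (isX_star hx hyz) ?_
    rw [path_star hxy hz, path_star hx hy, path_star hx hyz, path_star hy hz, List.append_assoc]
  case left_one =>
    refine eq_of_path_eq (isX_star isX_one hx) hx ?_
    rw [path_star isX_one hx, path_one, List.nil_append]
end

section
/- For every a ∈ X with a ≠ (1), the tuple-level Farey map corresponds to the usual Farey map on rationals: θ(T_F(a)) = θ(a)/(1−θ(a)) if θ(a) < 1/2, and θ(T_F(a)) = (1−θ(a))/θ(a) if θ(a) ≥ 1/2. -/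
/-!
In the coordinate `y = 1 / x` the Farey map subtracts `1`, and takes a further reciprocal exactly
when `y ≥ 2`. Since `θ(n, t) = 1 / (n + θ(t))` with `0 ≤ θ(t) ≤ 1`, the case `y ≤ 2` removes a
leading entry `1` and the case `y ≥ 2` lowers a leading entry `n ≥ 2` by one; at `y = 2` the two
branches agree.
-/

section FareyMap

variable {𝕜 : Type*} [Field 𝕜] [LinearOrder 𝕜]

/-- The Farey map of `[0, 1]`, as a function on a whole ordered field so that no membership proof
is carried along. The value at `1/2` is given by the right branch; both branches equal `1` there. -/
def fareyMap (x : 𝕜) : 𝕜 := if x < 1 / 2 then x / (1 - x) else (1 - x) / x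

theorem fareyMap_of_lt {x : 𝕜} (hx : x < 1 / 2) : fareyMap x = x / (1 - x) := if_pos hx

theorem fareyMap_of_le {x : 𝕜} (hx : 1 / 2 ≤ x) : fareyMap x = (1 - x) / x := if_neg hx.not_gt

variable [IsStrictOrderedRing 𝕜]

theorem fareyMap_one_div_of_le_two {y : 𝕜} (hy₀ : 0 < y) (hy : y ≤ 2) :
    fareyMap (1 / y) = y - 1 := by
  rw [fareyMap_of_le (one_div_le_one_div_of_le hy₀ hy)]
  field_simp

theorem fareyMap_one_div_of_two_le {y : 𝕜} (hy : 2 ≤ y) : fareyMap (1 / y) = 1 / (y - 1) := by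
  obtain rfl | hy := hy.eq_or_lt
  · rw [fareyMap_one_div_of_le_two two_pos le_rfl]
    norm_num
  · have hy₀ : y ≠ 0 := by linarith
    have hy₁ : y - 1 ≠ 0 := by linarith
    rw [fareyMap_of_lt (one_div_lt_one_div_of_lt two_pos hy)]
    field_simp

end FareyMap

theorem theta_nil : theta [] = 1 := by simp [theta, cf]

theorem theta_cons (n : ℕ) (t : List ℕ) : theta (n :: t) = 1 / (n + theta t) := rfl

theorem theta_nonneg (a : List ℕ) : 0 ≤ theta a := by
  induction a with
  | nil => simp only [theta_nil, zero_le_one]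
  | cons n t ih => rw [theta_cons]; positivity

theorem theta_le_one {a : List ℕ} (ha : ∀ n ∈ a.head?, 0 < n) : theta a ≤ 1 := by
  cases a with
  | nil => exact theta_nil.le
  | cons n t =>
    have hn : (1 : ℚ) ≤ n := mod_cast ha n rfl
    rw [theta_cons]
    exact div_le_one_of_le₀ (by linarith [theta_nonneg t]) (by linarith [theta_nonneg t])

theorem TF_one_cons (t : List ℕ) : TF (1 :: t) = t := rfl

theorem TF_cons_of_two_le {n : ℕ} (hn : 2 ≤ n) (t : List ℕ) : TF (n :: t) = (n - 1) :: t := by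
  obtain ⟨m, rfl⟩ := Nat.exists_eq_add_of_le' hn
  rfl

theorem theta_TF_cons {n : ℕ} {t : List ℕ} (hn : 0 < n) (ht : theta t ≤ 1) :
    theta (TF (n :: t)) = fareyMap (theta (n :: t)) := by
  have ht₀ : 0 ≤ theta t := theta_nonneg t
  obtain rfl | hn₂ : n = 1 ∨ 2 ≤ n := by lia
  · rw [TF_one_cons, theta_cons, Nat.cast_one,
      fareyMap_one_div_of_le_two (by linarith) (by linarith), add_sub_cancel_left]
  · have hy : (2 : ℚ) ≤ n + theta t := le_add_of_le_of_nonneg (mod_cast hn₂) ht₀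
    rw [TF_cons_of_two_le hn₂, theta_cons, theta_cons, fareyMap_one_div_of_two_le hy,
      Nat.cast_pred hn, sub_add_eq_add_sub]

/-- For `a ∈ X` with `a ≠ (1)`, the tuple-level Farey map corresponds to the
usual Farey map on rationals: `θ(T_F a) = θ a / (1 − θ a)` if `θ a < 1/2`, and
`θ(T_F a) = (1 − θ a) / θ a` if `θ a ≥ 1/2`. -/
theorem theta_TF (a : List ℕ) (h : IsX a) (h1 : a ≠ [1]) :
    (theta a < 1 / 2 → theta (TF a) = theta a / (1 - theta a)) ∧
    (1 / 2 ≤ theta a → theta (TF a) = (1 - theta a) / theta a) := by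
  obtain ⟨hne, hpos⟩ := h
  obtain ⟨n, t, rfl⟩ := List.exists_cons_of_ne_nil hne
  have htail : theta t ≤ 1 :=
    theta_le_one fun m hm => hpos m (List.mem_cons_of_mem n (List.mem_of_mem_head? hm))
  have hfarey : theta (TF (n :: t)) = fareyMap (theta (n :: t)) :=
    theta_TF_cons (hpos n List.mem_cons_self) htail
  exact ⟨fun hlt => hfarey.trans (fareyMap_of_lt hlt), fun hle => hfarey.trans (fareyMap_of_le hle)⟩
end

section
/- For every a = (n_1,…,n_k) ∈ X with a ≠ (1), the Lebesgue transition function satisfies π_λ(a) := |I(a)|/|I(T_{φF}(a))| = 1 − [0;n_k,n_{k−1},…,n_1]. -/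
/-! Let `q_k = ⟨n₁, …, n_k⟩` be the continuants. Pulling the first entry out of a tuple is a Möbius
map, which yields `|I(n₁, …, n_k)| = 1 / (q_{k-1} q_k)` by induction. Passing to the parent lowers
`n_k` by one and hence replaces `q_k` by `q_k - q_{k-1}`, so the ratio of the two lengths is
`1 - q_{k-1} / q_k`. The recursion for the `q_k` is the continued fraction expansion
`q_{k-1} / q_k = [0; n_k, …, n₁]`. -/

theorem cf_cons (n : ℕ) (t : List ℕ) : cf (n :: t) = 1 / (n + cf t) := rfl

theorem cf_nonneg : ∀ a : List ℕ, 0 ≤ cf a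
  | [] => le_rfl
  | n :: t => by
    have := cf_nonneg t
    rw [cf_cons]
    positivity

theorem add_cf_pos {n : ℕ} (hn : 0 < n) (t : List ℕ) : 0 < n + cf t :=
  add_pos_of_pos_of_nonneg (Nat.cast_pos.2 hn) (cf_nonneg t)

theorem contAux_pos {a : List ℕ} (ha : ∀ n ∈ a, 0 < n) : 0 < contAux a := by
  induction a using contAux.induct with
  | case1 => exact Nat.one_pos
  | case2 n => exact ha n List.mem_cons_self
  | case3 n m t _ iht =>
    simp only [List.forall_mem_cons] at ha
    exact Nat.add_pos_right _ (iht ha.2.2)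

theorem contAux_append_pair (a : List ℕ) (m n : ℕ) :
    contAux (a ++ [m, n]) = n * contAux (a ++ [m]) + contAux a := by
  induction a using contAux.induct with
  | case1 => simp only [List.nil_append, contAux]; ring
  | case2 k => simp only [List.cons_append, List.nil_append, contAux]; ring
  | case3 k j t ihj iht =>
    simp only [List.cons_append, contAux] at ihj ⊢
    rw [ihj, iht]
    ring

theorem contAux_reverse (a : List ℕ) : contAux a.reverse = contAux a := by
  induction a using contAux.induct with
  | case1 => rfl
  | case2 n => rfl
  | case3 n m t ihm iht =>
    have hrev : (n :: m :: t).reverse = t.reverse ++ [m, n] := by simp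
    rw [hrev, contAux_append_pair, ← List.reverse_cons, ihm, iht, contAux]

theorem contAux_cons {t : List ℕ} (ht : ∀ n ∈ t, 0 < n) (n : ℕ) :
    (contAux (n :: t) : ℚ) = (n + cf t) * contAux t := by
  induction t generalizing n with
  | nil => simp [contAux, cf]
  | cons m s ih =>
    obtain ⟨hm, hs⟩ := List.forall_mem_cons.1 ht
    have hcancel : cf (m :: s) * contAux (m :: s) = contAux s := by
      rw [ih hs, cf_cons, one_div, inv_mul_cancel_left₀ (add_cf_pos hm s).ne']
    rw [add_mul, hcancel]
    simp only [contAux, Nat.cast_add, Nat.cast_mul]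

theorem cont_eq_contAux (a : List ℕ) : cont a = contAux a :=
  contAux_reverse a

theorem cont_pos {a : List ℕ} (ha : ∀ n ∈ a, 0 < n) : 0 < cont a :=
  cont_eq_contAux a ▸ contAux_pos ha

theorem cont_cons {t : List ℕ} (ht : ∀ n ∈ t, 0 < n) (n : ℕ) :
    (cont (n :: t) : ℚ) = (n + cf t) * cont t := by
  rw [cont_eq_contAux, cont_eq_contAux, contAux_cons ht]

theorem cont_concat {b : List ℕ} (hb : ∀ n ∈ b, 0 < n) (n : ℕ) :
    (cont (b ++ [n]) : ℚ) = (n + cf b.reverse) * cont b := by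
  rw [cont, List.reverse_concat, contAux_cons (by simpa using hb), cont]

theorem cont_concat_concat_zero (b : List ℕ) (m : ℕ) : cont (b ++ [m] ++ [0]) = cont b := by
  simp [cont, contAux]

theorem cont_concat_succ (b : List ℕ) (n : ℕ) :
    cont (b ++ [n + 1]) = cont (b ++ [n]) + cont b := by
  simp only [cont, List.reverse_concat]
  cases b.reverse with
  | nil => rfl
  | cons m t => simp only [contAux]; ring

theorem cf_reverse_concat {b : List ℕ} (hb : ∀ n ∈ b, 0 < n) (n : ℕ) :
    cf (b ++ [n]).reverse = cont b / cont (b ++ [n]) := by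
  have hcont : (cont b : ℚ) ≠ 0 := Nat.cast_ne_zero.2 (cont_pos hb).ne'
  rw [List.reverse_concat, cf_cons, cont_concat hb, div_mul_cancel_right₀ hcont, one_div]

theorem ilen_cons {n : ℕ} (hn : 0 < n) {t : List ℕ} (ht : t ≠ []) :
    ilen (n :: t) = ilen t / ((n + cf t) * (n + cf t.dropLast)) := by
  have hpos := add_cf_pos hn t
  have hpos_dropLast := add_cf_pos hn t.dropLast
  rw [ilen, List.dropLast_cons_of_ne_nil ht, cf_cons, cf_cons,
    div_sub_div _ _ hpos.ne' hpos_dropLast.ne', abs_div, abs_of_pos (mul_pos hpos hpos_dropLast),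
    one_mul, mul_one, add_sub_add_left_eq_sub, abs_sub_comm, ilen]

theorem ilen_concat {b : List ℕ} (hb : ∀ m ∈ b, 0 < m) {n : ℕ} (hn : 0 < n) :
    ilen (b ++ [n]) = 1 / (cont b * cont (b ++ [n])) := by
  induction b with
  | nil => simp [ilen, cf, cont, contAux]
  | cons c t ih =>
    obtain ⟨hc, ht⟩ := List.forall_mem_cons.1 hb
    have htn : ∀ m ∈ t ++ [n], 0 < m := List.forall_mem_append.2 ⟨ht, by simpa using hn⟩
    rw [List.cons_append, ilen_cons hc (List.concat_ne_nil n t), List.dropLast_concat, ih ht,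
      cont_cons ht, cont_cons htn, div_div]
    ring

theorem TpF_concat_one (b : List ℕ) : TpF (b ++ [1]) = b := by
  simp [TpF, TF]

theorem TpF_concat_succ (b : List ℕ) {n : ℕ} (hn : n ≠ 0) : TpF (b ++ [n + 1]) = b ++ [n] := by
  simp [TpF, TF, hn]

-- Both branches of `TF` share this formula: at `n = 0`, `cont (b ++ [0])` is `cont b.dropLast`.
theorem ilen_TpF_concat_succ {b : List ℕ} (hb : ∀ m ∈ b, 0 < m) {n : ℕ} (hne : b ++ [n + 1] ≠ [1]) :
    ilen (TpF (b ++ [n + 1])) = 1 / (cont b * cont (b ++ [n])) := by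
  obtain rfl | hn := eq_or_ne n 0
  · obtain rfl | ⟨c, m, rfl⟩ := b.eq_nil_or_concat'
    · exact absurd rfl hne
    · obtain ⟨hc, hm⟩ := List.forall_mem_append.1 hb
      rw [TpF_concat_one, ilen_concat hc (hm m List.mem_cons_self), cont_concat_concat_zero,
        mul_comm]
  · rw [TpF_concat_succ b hn, ilen_concat hb (Nat.pos_of_ne_zero hn)]

/-- The Lebesgue transition function satisfies
`π_λ(a) = |I(a)| / |I(T_{φF} a)| = 1 − [0; n_k, n_{k−1}, …, n₁]`. -/
theorem pi_lambda_formula (a : List ℕ) (h : IsX a) (h1 : a ≠ [1]) :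
    ilen a / ilen (TpF a) = 1 - cf a.reverse := by
  obtain ⟨hne, hpos⟩ := h
  obtain rfl | ⟨b, k, rfl⟩ := a.eq_nil_or_concat'
  · exact absurd rfl hne
  obtain ⟨hb, hk⟩ := List.forall_mem_append.1 hpos
  obtain ⟨n, rfl⟩ := Nat.exists_eq_add_one_of_ne_zero (hk k List.mem_cons_self).ne'
  have hcont : (cont b : ℚ) ≠ 0 := Nat.cast_ne_zero.2 (cont_pos hb).ne'
  have hcont_succ : (cont (b ++ [n + 1]) : ℚ) ≠ 0 := Nat.cast_ne_zero.2 (cont_pos hpos).ne'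
  calc ilen (b ++ [n + 1]) / ilen (TpF (b ++ [n + 1]))
    _ = cont (b ++ [n]) / cont (b ++ [n + 1]) := by
      rw [ilen_concat hb n.succ_pos, ilen_TpF_concat_succ hb h1,
        div_div_div_cancel_left' _ _ one_ne_zero, mul_div_mul_left _ _ hcont]
    _ = 1 - cont b / cont (b ++ [n + 1]) := by
      rw [eq_sub_iff_add_eq, ← add_div, ← Nat.cast_add, ← cont_concat_succ, div_self hcont_succ]
    _ = 1 - cf (b ++ [n + 1]).reverse := by
      rw [cf_reverse_concat hb]
end

section
/- J is an involution of X: for every a ∈ X, J(J(a)) = a. -/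
/-!
The tuples in `X` are exactly those obtained from `(1)` by two moves: prepending a `1`, and
increasing the first entry by `1`. `J` fixes `(1)` and exchanges the two moves: increasing `n₁`
lengthens the initial block `1_{n₁−1}` of `J(n₁, …)` by one, and prepending a `1` replaces this
block by `1_0, 2, 1_{n₁−2}`, that is, it increases the first entry. Hence `J ∘ J` fixes `(1)` and
commutes with both moves, so it is the identity.
-/

theorem modifyHead_append_of_ne_nil {α : Type*} (f : α → α) {l : List α} (hl : l ≠ [])
    (t : List α) : (l ++ t).modifyHead f = l.modifyHead f ++ t := by
  obtain ⟨x, l, rfl⟩ := List.exists_cons_of_ne_nil hl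
  rfl

theorem Jmid_ne_nil (l : List ℕ) {out : List ℕ} (hout : out ≠ []) : Jmid l out ≠ [] := by
  fun_induction Jmid l out <;> grind

theorem Jmid_append (l : List ℕ) {out : List ℕ} (hout : out ≠ []) (s : List ℕ) :
    Jmid l (out ++ s) = Jmid l out ++ s := by
  induction l generalizing out with
  | nil => rfl
  | cons n l ih =>
    obtain ⟨h, t, rfl⟩ := List.exists_cons_of_ne_nil hout
    by_cases hn : n = 1
    · simpa [Jmid, hn] using ih (List.cons_ne_nil (h + 1) t)
    · simp only [Jmid, if_neg hn, ← List.append_assoc]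
      exact ih (List.cons_ne_nil 2 (List.replicate (n - 2) 1 ++ h :: t))

theorem reverse_Jmid_concat_succ (l out : List ℕ) (h : ℕ) :
    (Jmid l (out ++ [h + 1])).reverse =
      (Jmid l (out ++ [h])).reverse.modifyHead (· + 1) := by
  induction l generalizing out h with
  | nil => simp [Jmid]
  | cons n l ih =>
    by_cases hn : n = 1
    · cases out with
      | nil => simpa [Jmid, hn] using ih [] (h + 1)
      | cons x t => simpa [Jmid, hn] using ih ((x + 1) :: t) h
    · simp only [Jmid, if_neg hn, ← List.append_assoc]
      exact ih (2 :: (List.replicate (n - 2) 1 ++ out)) h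

theorem J_cons_concat (n : ℕ) (l : List ℕ) (m : ℕ) :
    J (n :: (l ++ [m])) =
      (Jmid l (2 :: List.replicate (n - 1) 1)).reverse ++ List.replicate (m - 1) 1 := by
  cases l with
  | nil => simp [J]
  | cons x l => simp [J, List.dropLast_cons_of_ne_nil, List.getLast?_cons]

theorem J_succ_cons {n : ℕ} (hn : 0 < n) (r : List ℕ) : J ((n + 1) :: r) = 1 :: J (n :: r) := by
  obtain ⟨k, rfl⟩ := Nat.exists_eq_add_one.mpr hn
  rcases r.eq_nil_or_concat' with rfl | ⟨l, m, rfl⟩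
  · rfl
  · have hJmid : Jmid l (2 :: List.replicate (k + 1) 1) =
        Jmid l (2 :: List.replicate k 1) ++ [1] := by
      rw [List.replicate_succ', ← List.cons_append, Jmid_append l (List.cons_ne_nil _ _)]
    simp [J_cons_concat, hJmid]

theorem J_one_cons_cons {m : ℕ} (hm : 0 < m) (r : List ℕ) :
    J (1 :: m :: r) = (J (m :: r)).modifyHead (· + 1) := by
  obtain ⟨k, rfl⟩ := Nat.exists_eq_add_one.mpr hm
  rcases r.eq_nil_or_concat' with rfl | ⟨l, p, rfl⟩
  · simp [J, Jmid, List.replicate_succ]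
  · have hJmid : (Jmid ((k + 1) :: l) [2]).reverse =
        (Jmid l (2 :: List.replicate k 1)).reverse.modifyHead (· + 1) := by
      cases k with
      | zero => simpa [Jmid] using reverse_Jmid_concat_succ l [] 2
      | succ k =>
        simpa [Jmid, List.replicate_succ'] using
          reverse_Jmid_concat_succ l (2 :: List.replicate k 1) 1
    have hne := Jmid_ne_nil l (List.cons_ne_nil 2 (List.replicate k 1))
    rw [← List.cons_append, J_cons_concat, List.cons_append, J_cons_concat]
    simp [hJmid, modifyHead_append_of_ne_nil, hne]

namespace IsX

variable {a : List ℕ}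

theorem singleton_one : IsX [1] :=
  ⟨List.cons_ne_nil 1 [], List.forall_mem_singleton.mpr Nat.one_pos⟩

theorem cons_one (ha : IsX a) : IsX (1 :: a) :=
  ⟨List.cons_ne_nil 1 a, List.forall_mem_cons.mpr ⟨Nat.one_pos, ha.2⟩⟩

theorem modifyHead_succ (ha : IsX a) : IsX (a.modifyHead (· + 1)) := by
  obtain ⟨n, r, rfl⟩ := List.exists_cons_of_ne_nil ha.1
  exact ⟨List.cons_ne_nil _ r,
    List.forall_mem_cons.mpr ⟨n.succ_pos, (List.forall_mem_cons.mp ha.2).2⟩⟩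

@[elab_as_elim]
theorem induction {P : (a : List ℕ) → IsX a → Prop} (one : P [1] singleton_one)
    (cons_one : ∀ (a : List ℕ) (ha : IsX a), P a ha → P (1 :: a) ha.cons_one)
    (modifyHead_succ : ∀ (a : List ℕ) (ha : IsX a), P a ha →
      P (a.modifyHead (· + 1)) ha.modifyHead_succ)
    (ha : IsX a) : P a ha := by
  induction a with
  | nil => exact absurd rfl ha.1
  | cons n r ih =>
    obtain ⟨hn, hr⟩ := List.forall_mem_cons.mp ha.2
    induction n, hn using Nat.le_induction with
    | base =>
      rcases eq_or_ne r [] with rfl | hne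
      · exact one
      · exact cons_one r ⟨hne, hr⟩ (ih ⟨hne, hr⟩)
    | succ n hn ihn =>
      have hnr : IsX (n :: r) := ⟨List.cons_ne_nil n r, List.forall_mem_cons.mpr ⟨hn, hr⟩⟩
      exact modifyHead_succ (n :: r) hnr (ihn hnr)

theorem J_cons_one (ha : IsX a) : J (1 :: a) = (J a).modifyHead (· + 1) := by
  obtain ⟨m, r, rfl⟩ := List.exists_cons_of_ne_nil ha.1
  exact J_one_cons_cons (List.forall_mem_cons.mp ha.2).1 r

theorem J_modifyHead_succ (ha : IsX a) : J (a.modifyHead (· + 1)) = 1 :: J a := by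
  obtain ⟨n, r, rfl⟩ := List.exists_cons_of_ne_nil ha.1
  exact J_succ_cons (List.forall_mem_cons.mp ha.2).1 r

theorem isX_J (ha : IsX a) : IsX (J a) := by
  induction ha using IsX.induction with
  | one => exact singleton_one
  | cons_one a ha ih => exact ha.J_cons_one ▸ ih.modifyHead_succ
  | modifyHead_succ a ha ih => exact ha.J_modifyHead_succ ▸ ih.cons_one

end IsX

/-- `J` is an involution of `X`. -/
theorem J_involutive (a : List ℕ) (h : IsX a) : J (J a) = a := by
  induction h using IsX.induction with
  | one => rfl
  | cons_one a ha ih => rw [ha.J_cons_one, ha.isX_J.J_modifyHead_succ, ih]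
  | modifyHead_succ a ha ih => rw [ha.J_modifyHead_succ, ha.isX_J.J_cons_one, ih]
end

section
/- J preserves the depth on the Farey tree: for every a = (n_1,…,n_k) ∈ X, ‖J(a)‖ = ‖a‖, where ‖(n_1,…,n_k)‖ := n_1+⋯+n_k−1. -/
/-!
Each middle entry `n` adds `n` to the sum of the output: the block `1_{n−2}, 2` has sum
`(n − 2) + 2`, and for `n = 1` this is the amount `−1 + 2` by which resolving `1_{−1}, 2` raises
the preceding entry. The outer blocks `1_{n₁−1}` and `1_{n_k−1}` each fall one short, which is made
up by the one `2` among the `k − 1` twos that no middle entry accounts for.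
-/

theorem sum_Jmid {l : List ℕ} (hl : ∀ n ∈ l, 0 < n) (out : List ℕ) :
    (Jmid l out).sum = out.sum + l.sum := by
  fun_induction Jmid l out with
  | case1 out => simp
  | case2 rest out ih =>
    have sum_incr_head : (match out with
        | [] => [1]
        | h :: t => (h + 1) :: t).sum = out.sum + 1 := by
      cases out with
      | nil => simp
      | cons h t => simp [add_right_comm]
    rw [ih (List.forall_mem_cons.mp hl).2, sum_incr_head, List.sum_cons, add_assoc]
  | case3 n rest out hn ih =>
    obtain ⟨hpos, hrest⟩ := List.forall_mem_cons.mp hl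
    have hblock : 2 + (n - 2) = n := by omega
    calc (Jmid rest (2 :: (List.replicate (n - 2) 1 ++ out))).sum
        = 2 + (n - 2) + out.sum + rest.sum := by simp [ih hrest, add_assoc]
      _ = out.sum + (n :: rest).sum := by rw [hblock, List.sum_cons]; ring

theorem sum_J {a : List ℕ} (ha : ∀ n ∈ a, 0 < n) : (J a).sum = a.sum := by
  match a with
  | [] => rfl
  | n :: t =>
    obtain ⟨hn, ht⟩ := List.forall_mem_cons.mp ha
    obtain rfl | ⟨l, m, rfl⟩ := List.eq_nil_or_concat' t
    · simp [J]
    · obtain ⟨hl, hm⟩ := List.forall_mem_append.mp ht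
      rw [List.forall_mem_singleton] at hm
      calc (J (n :: (l ++ [m]))).sum
          = 2 + (n - 1) + l.sum + (m - 1) := by simp [J_cons_concat, sum_Jmid hl]
        _ = n + (l.sum + m) := by omega
        _ = (n :: (l ++ [m])).sum := by simp

/-- `J` preserves the depth on the Farey tree: `‖J a‖ = ‖a‖`, where
`‖(n₁, …, n_k)‖ = n₁ + ⋯ + n_k − 1`. -/
theorem J_preserves_depth (a : List ℕ) (h : IsX a) :
    (J a).sum - 1 = a.sum - 1 := by
  rw [sum_J h.2]
end
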